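/- arXiv:2001.08825 — 3 statements merged into one kernel-verified Lean document; each statement's English description precedes it below -/
import Mathlib

section
/- Let α ∈ (0,2), n ∈ ℕ (n ≥ 0), and x ∈ ℝ. Define SH_{2n+1}(x) = Im λ_{n+1}(x) (the sine-like Higgins function). Then y ↦ (SH_{2n+1}'(x−y) − SH_{2n+1}'(x+y))·y^(−α) is absolutely integrable on (0,∞), and (c_α/α)·∫₀^∞ (SH_{2n+1}'(x−y) − SH_{2n+1}'(x+y))·y^(−α) dy = (2(n+1)·Γ(1+α)/(1+x²)^((n+1+α)/2))·cos((n+1+α)·arccot(x) − πα/2)·∑_{l≥0, 2l≤n} (−1)^l·C(n,2l)·x^(n−2l)·G_α(2l) + (2(n+1)·Γ(1+α)/(1+x²)^((n+1+α)/2))·sin((n+1+α)·arccot(x) − πα/2)·∑_{l≥0, 2l+1≤n} (−1)^l·C(n,2l+1)·x^(n−1−2l)·G_α(2l+1). -/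
open MeasureTheory Finset

/-- The constant `c_α = α·2^(α−1)·Γ(1/2+α/2)/(√π·Γ(1−α/2))`. -/
noncomputable def cFrac (α : ℝ) : ℝ :=
  α * 2 ^ (α - 1) * Real.Gamma (1 / 2 + α / 2) / (Real.sqrt Real.pi * Real.Gamma (1 - α / 2))

/-- The complex Higgins function `λ_n(x) = ((ix−1)/(ix+1))^n`. -/
noncomputable def higgins (n : ℤ) (x : ℝ) : ℂ :=
  ((Complex.I * (x : ℂ) - 1) / (Complex.I * (x : ℂ) + 1)) ^ n

/-- The derivative `λ_n'`. -/
noncomputable def higgins' (n : ℤ) (x : ℝ) : ℂ := deriv (higgins n) x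

/-- The complex Christov function `μ_n(x) = (ix−1)^n/(ix+1)^(n+1)`. -/
noncomputable def christov (n : ℤ) (x : ℝ) : ℂ :=
  (Complex.I * (x : ℂ) - 1) ^ n / (Complex.I * (x : ℂ) + 1) ^ (n + 1)

/-- The derivative `μ_n'`. -/
noncomputable def christov' (n : ℤ) (x : ℝ) : ℂ := deriv (christov n) x

/-- Generalized binomial coefficient `C(z,k) = z(z−1)⋯(z−k+1)/k!` over `ℂ`. -/
noncomputable def gbinom (z : ℂ) (k : ℕ) : ℂ :=
  (∏ i ∈ Finset.range k, (z - (i : ℂ))) / (k.factorial : ℂ)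

/-- Generalized binomial coefficient `C(z,k) = z(z−1)⋯(z−k+1)/k!` over `ℝ`. -/
noncomputable def gbinomR (z : ℝ) (k : ℕ) : ℝ :=
  (∏ i ∈ Finset.range k, (z - (i : ℝ))) / (k.factorial : ℝ)

/-- Rising factorial (Pochhammer symbol) `(z)_k = z(z+1)⋯(z+k−1)` over `ℂ`. -/
noncomputable def poch (z : ℂ) (k : ℕ) : ℂ := ∏ i ∈ Finset.range k, (z + (i : ℂ))

/-- `G_α(l) = (1/(l+1))·∑_{k=0}^{l} C(l+1,k+1)·C(−1−α,k)·2^k = ₂F₁(−l, 1+α; 2; 2)`, over `ℂ`. -/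
noncomputable def Gc (α : ℝ) (l : ℕ) : ℂ :=
  (1 / ((l : ℂ) + 1)) * ∑ k ∈ Finset.range (l + 1),
    gbinom ((l : ℂ) + 1) (k + 1) * gbinom (-1 - (α : ℂ)) k * 2 ^ k

/-- `G_α(l) = (1/(l+1))·∑_{k=0}^{l} C(l+1,k+1)·C(−1−α,k)·2^k = ₂F₁(−l, 1+α; 2; 2)`, over `ℝ`. -/
noncomputable def GR (α : ℝ) (l : ℕ) : ℝ :=
  (1 / ((l : ℝ) + 1)) * ∑ k ∈ Finset.range (l + 1),
    gbinomR ((l : ℝ) + 1) (k + 1) * gbinomR (-1 - α) k * 2 ^ k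

/-- `H_α(l) = ∑_{k=0}^{l} C(l,k)·C(−1−α,k)·2^k = ₂F₁(−l, 1+α; 1; 2)`, over `ℂ`. -/
noncomputable def Hc (α : ℝ) (l : ℕ) : ℂ :=
  ∑ k ∈ Finset.range (l + 1), gbinom (l : ℂ) k * gbinom (-1 - (α : ℂ)) k * 2 ^ k

/-- `H_α(l) = ∑_{k=0}^{l} C(l,k)·C(−1−α,k)·2^k = ₂F₁(−l, 1+α; 1; 2)`, over `ℝ`. -/
noncomputable def HR (α : ℝ) (l : ℕ) : ℝ :=
  ∑ k ∈ Finset.range (l + 1), gbinomR (l : ℝ) k * gbinomR (-1 - α) k * 2 ^ k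

/-- `arccot(x) = π/2 − arctan(x) ∈ (0,π)`. -/
noncomputable def arccot (x : ℝ) : ℝ := Real.pi / 2 - Real.arctan x

/-- The sine-like Higgins function `SH_{2n+1}(x) = Im λ_{n+1}(x)`. -/
noncomputable def SH (n : ℕ) (x : ℝ) : ℝ := (higgins ((n : ℤ) + 1) x).im

/-- The derivative `SH_{2n+1}'`. -/
noncomputable def SH' (n : ℕ) (x : ℝ) : ℝ := deriv (SH n) x


/-! ### Kernel and bounds -/

/-- Difference kernel. -/
noncomputable def kerD (m : ℕ) (a : ℂ) (y : ℝ) : ℂ :=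
  ((a - Complex.I * (y : ℂ))⁻¹) ^ m - ((a + Complex.I * (y : ℂ))⁻¹) ^ m

/-- Kernel integral. -/
noncomputable def kerI (α : ℝ) (m : ℕ) (a : ℂ) : ℂ :=
  ∫ y in Set.Ioi (0 : ℝ), kerD m a y * ((y ^ (-α) : ℝ) : ℂ)

lemma ne_zero_of_re {a : ℂ} (ha : 0 < a.re) (y : ℝ) : a + Complex.I * (y : ℂ) ≠ 0 := by
  intro h
  have := congrArg Complex.re h
  simp at this
  linarith

lemma ne_zero_of_re' {a : ℂ} (ha : 0 < a.re) (y : ℝ) : a - Complex.I * (y : ℂ) ≠ 0 := by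
  intro h
  have := congrArg Complex.re h
  simp at this
  linarith

lemma inv_bound {δ R : ℝ} (hδ : 0 < δ) {a : ℂ} (h1 : δ ≤ a.re) (h2 : ‖a‖ ≤ R) (y : ℝ) :
    ‖(a + Complex.I * (y : ℂ))⁻¹‖ ≤ ((1 + R + δ) / δ) / (1 + |y|) := by
  have hne := ne_zero_of_re (hδ.trans_le h1) y
  have hpos : 0 < ‖a + Complex.I * (y : ℂ)‖ := norm_pos_iff.mpr hne
  have hR : 0 ≤ R := (norm_nonneg a).trans h2
  have h3 : δ ≤ ‖a + Complex.I * (y : ℂ)‖ := by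
    refine le_trans ?_ (Complex.re_le_norm _)
    simpa using h1
  have h4 : |y| ≤ ‖a + Complex.I * (y : ℂ)‖ + R := by
    have : ‖(a + Complex.I * (y : ℂ)) - a‖ ≤ ‖a + Complex.I * (y : ℂ)‖ + ‖a‖ := norm_sub_le _ _
    have h5 : ‖(a + Complex.I * (y : ℂ)) - a‖ = |y| := by simp
    linarith
  have hy : 0 ≤ |y| := abs_nonneg y
  rw [norm_inv, inv_eq_one_div, div_le_div_iff₀ hpos (by positivity), div_mul_eq_mul_div,
    le_div_iff₀ hδ]
  nlinarith [mul_le_mul_of_nonneg_left h3 hR]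

lemma inv_bound' {δ R : ℝ} (hδ : 0 < δ) {a : ℂ} (h1 : δ ≤ a.re) (h2 : ‖a‖ ≤ R) (y : ℝ) :
    ‖(a - Complex.I * (y : ℂ))⁻¹‖ ≤ ((1 + R + δ) / δ) / (1 + |y|) := by
  have := inv_bound hδ h1 h2 (-y)
  rw [abs_neg] at this
  convert this using 3
  push_cast; ring

lemma kerD_bound {δ R : ℝ} (hδ : 0 < δ) (m : ℕ) {a : ℂ} (h1 : δ ≤ a.re) (h2 : ‖a‖ ≤ R)
    {y : ℝ} (hy : 0 < y) :
    ‖kerD (m + 1) a y‖ ≤ (2 * (m + 1) * ((1 + R + δ) / δ) ^ (m + 2)) * (y / (1 + y) ^ 2) := by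
  have hR : 0 ≤ R := (norm_nonneg a).trans h2
  have hu := inv_bound' hδ h1 h2 y
  have hv := inv_bound hδ h1 h2 y
  rw [abs_of_pos hy] at hu hv
  set u := (a - Complex.I * (y : ℂ))⁻¹ with hu'
  set v := (a + Complex.I * (y : ℂ))⁻¹ with hv'
  set K := (1 + R + δ) / δ with hK
  have hK0 : 0 ≤ K := by positivity
  have hKy : K / (1 + y) ≤ K := div_le_self hK0 (by linarith)
  have huv : u - v = 2 * Complex.I * y * (u * v) := by
    have e1 := ne_zero_of_re (hδ.trans_le h1) y
    have e2 := ne_zero_of_re' (hδ.trans_le h1) y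
    rw [hu', hv']
    field_simp
    ring
  have hd : ‖u - v‖ ≤ 2 * y * (K / (1 + y)) ^ 2 := by
    rw [huv, norm_mul, norm_mul u v]
    have : ‖2 * Complex.I * (y : ℂ)‖ = 2 * y := by simp [abs_of_pos hy]
    rw [this, pow_two]
    gcongr
  have hs : ‖∑ i ∈ Finset.range (m + 1), u ^ i * v ^ (m + 1 - 1 - i)‖ ≤ (m + 1) * K ^ m := by
    refine (norm_sum_le _ _).trans ?_
    have : ∀ i ∈ Finset.range (m + 1), ‖u ^ i * v ^ (m + 1 - 1 - i)‖ ≤ K ^ m := by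
      intro i hi
      have hi' : i ≤ m := Nat.lt_succ_iff.mp (Finset.mem_range.mp hi)
      rw [norm_mul, norm_pow, norm_pow]
      calc ‖u‖ ^ i * ‖v‖ ^ (m + 1 - 1 - i) ≤ K ^ i * K ^ (m + 1 - 1 - i) := by
            gcongr
            · exact hu.trans hKy
            · exact hv.trans hKy
        _ = K ^ m := by rw [← pow_add]; congr 1; omega
    refine (Finset.sum_le_sum this).trans ?_
    simp
  have hmain : kerD (m + 1) a y = (∑ i ∈ Finset.range (m + 1), u ^ i * v ^ (m + 1 - 1 - i)) * (u - v) := by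
    rw [(Commute.all u v).geom_sum₂_mul]
    rfl
  rw [hmain, norm_mul]
  calc _ ≤ ((m + 1) * K ^ m) * (2 * y * (K / (1 + y)) ^ 2) := by gcongr
    _ = _ := by
      clear_value K
      rw [div_pow, pow_add]
      field_simp

lemma bound_integrable {α : ℝ} (hα : α ∈ Set.Ioo (0 : ℝ) 2) :
    IntegrableOn (fun y : ℝ => y / (1 + y) ^ 2 * y ^ (-α)) (Set.Ioi 0) := by
  obtain ⟨h0, h2⟩ := hα
  have hm : Measurable (fun y : ℝ => y / (1 + y) ^ 2 * y ^ (-α)) := by fun_prop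
  rw [← Set.Ioc_union_Ioi_eq_Ioi (zero_le_one' ℝ)]
  refine IntegrableOn.union ?_ ?_
  · have h := (intervalIntegral.intervalIntegrable_rpow' (a := 0) (b := 1) (r := 1 - α) (by linarith))
    rw [intervalIntegrable_iff_integrableOn_Ioc_of_le zero_le_one] at h
    refine Integrable.mono' h hm.aestronglyMeasurable ?_
    refine (ae_restrict_iff' measurableSet_Ioc).mpr (.of_forall fun y hy => ?_)
    have hy0 : 0 < y := hy.1
    rw [Real.norm_of_nonneg (by positivity), sub_eq_add_neg, Real.rpow_add hy0, Real.rpow_one]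
    gcongr
    exact div_le_self hy0.le (by nlinarith)
  · have h := integrableOn_Ioi_rpow_of_lt (a := -1 - α) (c := 1) (by linarith) one_pos
    refine Integrable.mono' h hm.aestronglyMeasurable ?_
    refine (ae_restrict_iff' measurableSet_Ioi).mpr (.of_forall fun y hy => ?_)
    have hy0 : 0 < y := one_pos.trans hy
    rw [Real.norm_of_nonneg (by positivity), sub_eq_add_neg, Real.rpow_add hy0, Real.rpow_neg_one]
    gcongr
    rw [inv_eq_one_div, div_le_div_iff₀ (by positivity) hy0]
    nlinarith

lemma kerD_measurable (m : ℕ) (a : ℂ) : Measurable (fun y : ℝ => kerD m a y) := by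
  unfold kerD
  fun_prop

lemma kerF_measurable (α : ℝ) (m : ℕ) (a : ℂ) :
    Measurable (fun y : ℝ => kerD m a y * ((y ^ (-α) : ℝ) : ℂ)) := by
  have := kerD_measurable m a
  fun_prop

lemma kerF_bound {δ R : ℝ} (hδ : 0 < δ) (α : ℝ) (m : ℕ) {a : ℂ} (h1 : δ ≤ a.re) (h2 : ‖a‖ ≤ R)
    {y : ℝ} (hy : 0 < y) :
    ‖kerD (m + 1) a y * ((y ^ (-α) : ℝ) : ℂ)‖ ≤
      (2 * (m + 1) * ((1 + R + δ) / δ) ^ (m + 2)) * (y / (1 + y) ^ 2 * y ^ (-α)) := by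
  rw [norm_mul, Complex.norm_real, Real.norm_of_nonneg (by positivity), ← mul_assoc]
  gcongr
  exact kerD_bound hδ m h1 h2 hy

lemma kerF_integrable {α : ℝ} (hα : α ∈ Set.Ioo (0 : ℝ) 2) (m : ℕ) {a : ℂ} (ha : 0 < a.re) :
    IntegrableOn (fun y : ℝ => kerD (m + 1) a y * ((y ^ (-α) : ℝ) : ℂ)) (Set.Ioi 0) := by
  refine Integrable.mono' ((bound_integrable hα).const_mul
    (2 * (m + 1) * ((1 + ‖a‖ + a.re) / a.re) ^ (m + 2)))
    (kerF_measurable α _ a).aestronglyMeasurable ?_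
  · exact (ae_restrict_iff' measurableSet_Ioi).mpr (.of_forall fun y hy =>
      kerF_bound ha α m le_rfl le_rfl hy)

lemma kerD_hasDerivAt (m : ℕ) {a : ℂ} (ha : 0 < a.re) (y : ℝ) :
    HasDerivAt (fun b => kerD (m + 1) b y) (-((m : ℂ) + 1) * kerD (m + 2) a y) a := by
  have e1 := ne_zero_of_re ha y
  have e2 := ne_zero_of_re' ha y
  have d1 := ((((hasDerivAt_id a).sub_const (Complex.I * (y : ℂ))).inv e2).pow (m + 1))
  have d2 := ((((hasDerivAt_id a).add_const (Complex.I * (y : ℂ))).inv e1).pow (m + 1))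
  refine (d1.sub d2).congr_deriv ?_
  simp only [kerD, Nat.add_sub_cancel, id, Pi.inv_apply]
  push_cast
  generalize ha1 : a - Complex.I * (y : ℂ) = A at *
  generalize ha1 : a + Complex.I * (y : ℂ) = B at *
  rw [div_eq_mul_inv, div_eq_mul_inv, ← inv_pow, ← inv_pow]
  ring

lemma kerI_hasDerivAt {α : ℝ} (hα : α ∈ Set.Ioo (0 : ℝ) 2) (m : ℕ) {a : ℂ} (ha : 0 < a.re) :
    HasDerivAt (kerI α (m + 1)) (-((m : ℂ) + 1) * kerI α (m + 2) a) a := by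
  have hs : {b : ℂ | a.re / 2 < b.re} ∩ Metric.ball 0 (‖a‖ + 1) ∈ nhds a := by
    refine IsOpen.mem_nhds ?_ ⟨by simp [ha], by simp⟩
    exact (isOpen_lt continuous_const Complex.continuous_re).inter Metric.isOpen_ball
  have hδ : 0 < a.re / 2 := by linarith
  have key := hasDerivAt_integral_of_dominated_loc_of_deriv_le
    (μ := volume.restrict (Set.Ioi (0 : ℝ)))
    (F := fun b y => kerD (m + 1) b y * ((y ^ (-α) : ℝ) : ℂ))
    (F' := fun b y => -((m : ℂ) + 1) * (kerD (m + 2) b y * ((y ^ (-α) : ℝ) : ℂ)))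
    (x₀ := a)
    (bound := fun y => (m + 1 : ℝ) * ((2 * ((m + 1 : ℕ) + 1) * ((1 + (‖a‖ + 1) + a.re / 2) / (a.re / 2)) ^ (m + 1 + 2)) * (y / (1 + y) ^ 2 * y ^ (-α))))
    hs (.of_forall fun b => (kerF_measurable α _ b).aestronglyMeasurable)
    (kerF_integrable hα m ha) ((kerF_measurable α _ a).const_mul _).aestronglyMeasurable
    ?_ (((bound_integrable hα).const_mul _).const_mul _) ?_
  · have := key.2
    rw [integral_const_mul] at this
    exact this
  · refine (ae_restrict_iff' measurableSet_Ioi).mpr (.of_forall fun y hy b hb => ?_)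
    have hb1 : a.re / 2 < b.re := hb.1
    have hb2 : ‖b‖ < ‖a‖ + 1 := by simpa using hb.2
    rw [norm_mul]
    have : ‖-((m : ℂ) + 1)‖ = m + 1 := by
      rw [norm_neg]; exact_mod_cast Complex.norm_natCast (m + 1)
    rw [this]
    gcongr
    exact kerF_bound hδ α (m + 1) hb1.le hb2.le hy
  · refine (ae_restrict_iff' measurableSet_Ioi).mpr (.of_forall fun y hy b hb => ?_)
    have hb1 : a.re / 2 < b.re := hb.1
    have := (kerD_hasDerivAt m (hδ.trans hb1) y).mul_const ((y ^ (-α) : ℝ) : ℂ)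
    rwa [mul_assoc] at this

lemma real_int {α : ℝ} (hα : α ∈ Set.Ioo (0 : ℝ) 2) {a : ℝ} (ha : 0 < a) :
    ∫ y in Set.Ioi (0 : ℝ), y ^ (1 - α) / (a ^ 2 + y ^ 2) =
      1 / 2 * Real.Gamma (1 - α / 2) * Real.Gamma (α / 2) * a ^ (-α) := by
  obtain ⟨h0, h2⟩ := hα
  have hin : ∀ s : ℝ, 0 < s → ∫ y in Set.Ioi (0 : ℝ), y ^ (1 - α) * Real.exp (-(s * (a ^ 2 + y ^ 2)))
      = (1 / 2 * Real.Gamma (1 - α / 2)) * (s ^ (α / 2 - 1) * Real.exp (-(a ^ 2 * s))) := by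
    intro s hs
    have := integral_rpow_mul_exp_neg_mul_rpow (p := 2) (q := 1 - α) (b := s) two_pos (by linarith) hs
    have e1 : -(1 - α + 1) / 2 = α / 2 - 1 := by ring
    have e2 : (1 - α + 1) / 2 = 1 - α / 2 := by ring
    rw [e1, e2] at this
    calc _ = ∫ y in Set.Ioi (0 : ℝ), Real.exp (-(a ^ 2 * s)) * (y ^ (1 - α) * Real.exp (-s * y ^ (2 : ℝ))) := by
            refine setIntegral_congr_fun measurableSet_Ioi fun y hy => ?_
            simp only [Real.rpow_two]
            rw [mul_left_comm, ← Real.exp_add]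
            ring_nf
      _ = _ := by rw [integral_const_mul, this]; ring
  have hint2 : IntegrableOn (fun s : ℝ => s ^ (α / 2 - 1) * Real.exp (-(a ^ 2 * s))) (Set.Ioi 0) := by
    have := integrableOn_rpow_mul_exp_neg_mul_rpow (p := 1) (s := α / 2 - 1) (b := a ^ 2) (by linarith)
      one_pos (by positivity)
    simpa using this
  have hF : Integrable (Function.uncurry fun s y : ℝ => y ^ (1 - α) * Real.exp (-(s * (a ^ 2 + y ^ 2))))
      ((volume.restrict (Set.Ioi (0 : ℝ))).prod (volume.restrict (Set.Ioi (0 : ℝ)))) := by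
    rw [integrable_prod_iff]
    · constructor
      · refine (ae_restrict_iff' measurableSet_Ioi).mpr (.of_forall fun s hs => ?_)
        have := (integrableOn_rpow_mul_exp_neg_mul_sq (b := s) hs (s := 1 - α) (by linarith)).mul_const
          (Real.exp (-(a ^ 2 * s)))
        refine this.congr (.of_forall fun y => ?_)
        simp only [Function.uncurry]
        rw [mul_assoc, ← Real.exp_add]
        ring_nf
      · refine IntegrableOn.congr_fun (hint2.const_mul (1 / 2 * Real.Gamma (1 - α / 2))) ?_ measurableSet_Ioi
        intro s hs
        simp only
        rw [← hin s hs]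
        refine setIntegral_congr_fun measurableSet_Ioi fun y hy => ?_
        have hy0 : (0 : ℝ) < y := hy
        simp only [Function.uncurry]
        rw [Real.norm_of_nonneg (by positivity)]
    · apply Measurable.aestronglyMeasurable
      unfold Function.uncurry
      fun_prop
  have hsw := integral_integral_swap hF
  calc _ = ∫ y in Set.Ioi (0 : ℝ), ∫ s in Set.Ioi (0 : ℝ), y ^ (1 - α) * Real.exp (-(s * (a ^ 2 + y ^ 2))) := by
        refine setIntegral_congr_fun measurableSet_Ioi fun y hy => ?_
        have hp : 0 < a ^ 2 + y ^ 2 := by positivity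
        have := integral_exp_mul_Ioi (a := -(a ^ 2 + y ^ 2)) (by linarith) 0
        rw [integral_const_mul, div_eq_mul_inv]
        congr 1
        rw [mul_zero, Real.exp_zero, neg_div_neg_eq, one_div] at this
        rw [← this]
        refine integral_congr_ae (.of_forall fun s => ?_)
        ring_nf
    _ = ∫ s in Set.Ioi (0 : ℝ), (1 / 2 * Real.Gamma (1 - α / 2)) * (s ^ (α / 2 - 1) * Real.exp (-(a ^ 2 * s))) := by
        rw [← hsw]
        exact setIntegral_congr_fun measurableSet_Ioi fun s hs => hin s hs
    _ = _ := by
        rw [integral_const_mul, Real.integral_rpow_mul_exp_neg_mul_Ioi (by linarith) (by positivity)]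
        rw [one_div (a ^ 2), Real.inv_rpow (by positivity), ← Real.rpow_neg (by positivity), ← Real.rpow_natCast,
          ← Real.rpow_mul ha.le]
        have : ((2 : ℕ) : ℝ) * -(α / 2) = -α := by push_cast; ring
        rw [this]
        ring

lemma kerI_one_real {α : ℝ} (hα : α ∈ Set.Ioo (0 : ℝ) 2) {a : ℝ} (ha : 0 < a) :
    kerI α 1 (a : ℂ) =
      Complex.I * ((Real.Gamma (1 - α / 2) * Real.Gamma (α / 2) : ℝ) : ℂ) * (a : ℂ) ^ (-(α : ℂ)) := by
  have e : kerI α 1 (a : ℂ) = ∫ y in Set.Ioi (0 : ℝ),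
      (2 * Complex.I) * ((y ^ (1 - α) / (a ^ 2 + y ^ 2) : ℝ) : ℂ) := by
    refine setIntegral_congr_fun measurableSet_Ioi fun y hy => ?_
    have hy0 : (0 : ℝ) < y := hy
    have e1 := ne_zero_of_re (a := (a : ℂ)) (by simpa using ha) y
    have e2 := ne_zero_of_re' (a := (a : ℂ)) (by simpa using ha) y
    have e3 : ((a : ℂ) ^ 2 + (y : ℂ) ^ 2) = (a - Complex.I * y) * (a + Complex.I * y) := by
      ring_nf; rw [Complex.I_sq]; ring
    simp only [kerD, pow_one]
    rw [sub_eq_add_neg 1 α, Real.rpow_add hy0, Real.rpow_one]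
    push_cast
    rw [e3]
    field_simp
    ring
  rw [e, integral_const_mul]
  have hr : ∫ y in Set.Ioi (0 : ℝ), ((y ^ (1 - α) / (a ^ 2 + y ^ 2) : ℝ) : ℂ) =
      ((∫ y in Set.Ioi (0 : ℝ), y ^ (1 - α) / (a ^ 2 + y ^ 2) : ℝ) : ℂ) := integral_ofReal
  rw [hr, real_int hα ha]
  have : (a : ℂ) ^ (-(α : ℂ)) = ((a ^ (-α) : ℝ) : ℂ) := by
    rw [Complex.ofReal_cpow ha.le]; push_cast; rfl
  rw [this]
  push_cast
  ring

lemma kerI_one {α : ℝ} (hα : α ∈ Set.Ioo (0 : ℝ) 2) {a : ℂ} (ha : 0 < a.re) :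
    kerI α 1 a =
      Complex.I * ((Real.Gamma (1 - α / 2) * Real.Gamma (α / 2) : ℝ) : ℂ) * a ^ (-(α : ℂ)) := by
  have hU : IsOpen {b : ℂ | 0 < b.re} := isOpen_lt continuous_const Complex.continuous_re
  have hf : AnalyticOnNhd ℂ (kerI α 1) {b : ℂ | 0 < b.re} := by
    refine DifferentiableOn.analyticOnNhd (fun b hb => ?_) hU
    exact (kerI_hasDerivAt hα 0 hb).differentiableAt.differentiableWithinAt
  have hg : AnalyticOnNhd ℂ (fun b : ℂ => Complex.I * ((Real.Gamma (1 - α / 2) * Real.Gamma (α / 2) : ℝ) : ℂ)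
      * b ^ (-(α : ℂ))) {b : ℂ | 0 < b.re} := by
    refine DifferentiableOn.analyticOnNhd (fun b hb => ?_) hU
    have : b ∈ Complex.slitPlane := Or.inl hb
    exact (((hasDerivAt_id b).cpow_const (c := -(α : ℂ)) this).const_mul _).differentiableAt.differentiableWithinAt
  have hpre : IsPreconnected {b : ℂ | 0 < b.re} := (convex_halfSpace_re_gt 0).isPreconnected
  refine hf.eqOn_of_preconnected_of_frequently_eq hg hpre (z₀ := 1) (by simp) ?_ ha
  have ht : Filter.Tendsto (fun t : ℝ => (t : ℂ)) (nhdsWithin 1 {1}ᶜ) (nhdsWithin 1 {1}ᶜ) := by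
    refine tendsto_nhdsWithin_iff.mpr ⟨?_, ?_⟩
    · have : Filter.Tendsto (fun t : ℝ => (t : ℂ)) (nhds 1) (nhds ((1 : ℝ) : ℂ)) :=
        Complex.continuous_ofReal.tendsto 1
      rw [Complex.ofReal_one] at this
      exact this.mono_left nhdsWithin_le_nhds
    · filter_upwards [self_mem_nhdsWithin] with t ht
      simpa using ht
  refine ht.frequently (Filter.Eventually.frequently ?_)
  have : ∀ᶠ t : ℝ in nhdsWithin 1 {1}ᶜ, 0 < t := nhdsWithin_le_nhds (lt_mem_nhds one_pos)
  filter_upwards [this] with t ht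
  exact kerI_one_real hα ht

/-- Rising factorial over the reals. -/
noncomputable def risR (z : ℝ) (k : ℕ) : ℝ := ∏ i ∈ Finset.range k, (z + (i : ℝ))

lemma kerI_eq {α : ℝ} (hα : α ∈ Set.Ioo (0 : ℝ) 2) (m : ℕ) : ∀ {a : ℂ}, 0 < a.re →
    kerI α (m + 1) a =
      Complex.I * ((Real.Gamma (1 - α / 2) * Real.Gamma (α / 2) * (risR α m / m.factorial) : ℝ) : ℂ)
        * a ^ (-(α : ℂ) - m) := by
  induction m with
  | zero => intro a ha; simpa [risR] using kerI_one hα ha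
  | succ m ih =>
    intro a ha
    have d1 := kerI_hasDerivAt hα m ha
    have hsl : a ∈ Complex.slitPlane := Or.inl ha
    have d2 := ((hasDerivAt_id a).cpow_const (c := -(α : ℂ) - m) hsl).const_mul
      (Complex.I * ((Real.Gamma (1 - α / 2) * Real.Gamma (α / 2) * (risR α m / m.factorial) : ℝ) : ℂ))
    have hev : kerI α (m + 1) =ᶠ[nhds a] (fun b => Complex.I * ((Real.Gamma (1 - α / 2) *
        Real.Gamma (α / 2) * (risR α m / m.factorial) : ℝ) : ℂ) * id b ^ (-(α : ℂ) - m)) := by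
      filter_upwards [(isOpen_lt continuous_const Complex.continuous_re).mem_nhds ha] with b hb
      exact ih hb
    have h := d1.unique (d2.congr_of_eventuallyEq hev)
    have hm : (m : ℂ) + 1 ≠ 0 := by exact_mod_cast Nat.succ_ne_zero m
    have hfac : (m.factorial : ℂ) ≠ 0 := by exact_mod_cast m.factorial_ne_zero
    have hris : risR α (m + 1) = risR α m * (α + m) := Finset.prod_range_succ _ _
    have e1 : -(α : ℂ) - m - 1 = -(α : ℂ) - ((m + 1 : ℕ) : ℂ) := by push_cast; ring
    rw [e1] at h
    have h2 : kerI α (m + 2) a = -(1 / ((m : ℂ) + 1)) * (-((m : ℂ) + 1) * kerI α (m + 2) a) := by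
      field_simp
    change kerI α (m + 2) a = _
    rw [h2, h, hris, Nat.factorial_succ]
    push_cast
    simp only [id]
    field_simp
    ring

/-- Coefficients of the derivative. -/
noncomputable def hcoef (n k : ℕ) : ℂ :=
  ((n + 1).choose (k + 1) : ℂ) * (-2) ^ (k + 1) * (-((k : ℂ) + 1) * Complex.I)

lemma one_add_ne (x : ℝ) : 1 + Complex.I * (x : ℂ) ≠ 0 := ne_zero_of_re (by simp) x

lemma higgins_eq (n : ℕ) (x : ℝ) : higgins ((n : ℤ) + 1) x =
    ∑ k ∈ Finset.range (n + 1), ((n + 1).choose (k + 1) : ℂ) * (-2) ^ (k + 1) *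
      ((1 + Complex.I * (x : ℂ))⁻¹) ^ (k + 1) + 1 := by
  have h := one_add_ne x
  have e : (Complex.I * (x : ℂ) - 1) / (Complex.I * (x : ℂ) + 1) =
      (-2) * (1 + Complex.I * (x : ℂ))⁻¹ + 1 := by
    rw [add_comm (Complex.I * (x : ℂ)) 1]
    field_simp
    ring
  have e2 : ((n : ℤ) + 1) = ((n + 1 : ℕ) : ℤ) := by push_cast; rfl
  rw [higgins, e, e2, zpow_natCast, add_pow, Finset.sum_range_succ']
  simp only [one_pow, mul_one, pow_zero, Nat.choose_zero_right, Nat.cast_one]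
  congr 1
  refine Finset.sum_congr rfl fun k _ => ?_
  rw [mul_pow]; ring

lemma higgins_hasDerivAt (n : ℕ) (x : ℝ) : HasDerivAt (higgins ((n : ℤ) + 1))
    (∑ k ∈ Finset.range (n + 1), hcoef n k * ((1 + Complex.I * (x : ℂ))⁻¹) ^ (k + 2)) x := by
  have e : higgins ((n : ℤ) + 1) = fun x : ℝ => ∑ k ∈ Finset.range (n + 1),
      ((n + 1).choose (k + 1) : ℂ) * (-2) ^ (k + 1) *
      ((1 + Complex.I * (x : ℂ))⁻¹) ^ (k + 1) + 1 := funext (higgins_eq n)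
  rw [e]
  refine HasDerivAt.add_const _ (HasDerivAt.fun_sum fun k _ => ?_)
  have d0 : HasDerivAt (fun x : ℝ => 1 + Complex.I * (x : ℂ)) Complex.I x := by
    have := ((Complex.ofRealCLM.hasDerivAt (x := x)).const_mul Complex.I).const_add 1
    simpa using this
  have d1 := ((d0.inv (one_add_ne x)).pow (k + 1)).const_mul (((n + 1).choose (k + 1) : ℂ) * (-2) ^ (k + 1))
  refine d1.congr_deriv ?_
  have h := one_add_ne x
  simp only [hcoef, Nat.add_sub_cancel, Pi.inv_apply]
  generalize 1 + Complex.I * (x : ℂ) = A at *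
  rw [div_eq_mul_inv, ← inv_pow]
  push_cast
  ring

lemma SH'_eq (n : ℕ) (x : ℝ) : SH' n x =
    (∑ k ∈ Finset.range (n + 1), hcoef n k * ((1 + Complex.I * (x : ℂ))⁻¹) ^ (k + 2)).im := by
  have := Complex.imCLM.hasFDerivAt.comp_hasDerivAt x (higgins_hasDerivAt n x)
  exact this.deriv

lemma integrand_eq (n : ℕ) (x y α : ℝ) : (SH' n (x - y) - SH' n (x + y)) * y ^ (-α) =
    (∑ k ∈ Finset.range (n + 1), hcoef n k *
      (kerD (k + 2) (1 + Complex.I * (x : ℂ)) y * ((y ^ (-α) : ℝ) : ℂ))).im := by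
  rw [SH'_eq, SH'_eq, ← Complex.sub_im, ← Complex.im_mul_ofReal, ← Finset.sum_sub_distrib,
    Finset.sum_mul]
  congr 1
  refine Finset.sum_congr rfl fun k _ => ?_
  rw [kerD]
  push_cast
  rw [mul_sub Complex.I, mul_add Complex.I, ← add_sub_assoc, ← add_assoc]
  ring

lemma integrand_integrable {α : ℝ} (hα : α ∈ Set.Ioo (0 : ℝ) 2) (n : ℕ) (x : ℝ) :
    IntegrableOn (fun y : ℝ => ∑ k ∈ Finset.range (n + 1), hcoef n k *
      (kerD (k + 2) (1 + Complex.I * (x : ℂ)) y * ((y ^ (-α) : ℝ) : ℂ))) (Set.Ioi 0) := by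
  refine integrable_finsetSum _ fun k _ => ?_
  exact (kerF_integrable hα (k + 1) (by simp)).const_mul _

lemma integral_eq {α : ℝ} (hα : α ∈ Set.Ioo (0 : ℝ) 2) (n : ℕ) (x : ℝ) :
    ∫ y in Set.Ioi (0 : ℝ), (SH' n (x - y) - SH' n (x + y)) * y ^ (-α) =
    (∑ k ∈ Finset.range (n + 1), hcoef n k * kerI α (k + 2) (1 + Complex.I * (x : ℂ))).im := by
  simp_rw [integrand_eq]
  have := Complex.imCLM.integral_comp_comm (integrand_integrable hα n x)
  refine this.trans ?_
  rw [Complex.imCLM_apply]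
  congr 1
  rw [integral_finsetSum]
  · refine Finset.sum_congr rfl fun k _ => ?_
    rw [integral_const_mul]; rfl
  · intro k _
    exact (kerF_integrable hα (k + 1) (by simp)).const_mul _

lemma cFrac_eq {α : ℝ} (hα : α ∈ Set.Ioo (0 : ℝ) 2) :
    cFrac α / α * (Real.Gamma (1 - α / 2) * Real.Gamma (α / 2)) = Real.Gamma α := by
  obtain ⟨h0, h2⟩ := hα
  have hd := Real.Gamma_mul_Gamma_add_half (α / 2)
  have e1 : 2 * (α / 2) = α := by ring
  rw [e1] at hd
  have hG : Real.Gamma (1 - α / 2) ≠ 0 := (Real.Gamma_pos_of_pos (by linarith)).ne'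
  have hpi : Real.sqrt Real.pi ≠ 0 := (Real.sqrt_pos.mpr Real.pi_pos).ne'
  have e2 : (2 : ℝ) ^ (α - 1) * 2 ^ (1 - α) = 1 := by
    rw [← Real.rpow_add two_pos]; simp
  rw [cFrac, add_comm (1 / 2) (α / 2)]
  calc _ = 2 ^ (α - 1) * (Real.Gamma (α / 2) * Real.Gamma (α / 2 + 1 / 2)) / Real.sqrt Real.pi := by
        field_simp
    _ = (2 ^ (α - 1) * 2 ^ (1 - α)) * Real.Gamma α := by
        rw [hd]; field_simp
    _ = _ := by rw [e2, one_mul]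

lemma lhs_eq {α : ℝ} (hα : α ∈ Set.Ioo (0 : ℝ) 2) (n : ℕ) (x : ℝ) :
    (cFrac α / α) * ∫ y in Set.Ioi (0 : ℝ), (SH' n (x - y) - SH' n (x + y)) * y ^ (-α) =
    -(2 * ((n : ℝ) + 1) * Real.Gamma (1 + α)) *
      ((1 + Complex.I * (x : ℂ)) ^ (-(α : ℂ) - ((n : ℂ) + 1)) *
        ∑ k ∈ Finset.range (n + 1), (n.choose k : ℂ) * (-2) ^ k *
          ((risR (1 + α) k / (k + 1).factorial : ℝ) : ℂ) * (1 + Complex.I * (x : ℂ)) ^ (n - k)).im := by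
  rw [integral_eq hα, ← Complex.im_ofReal_mul, ← Complex.im_ofReal_mul]
  congr 1
  rw [Finset.mul_sum, Finset.mul_sum, Finset.mul_sum]
  refine Finset.sum_congr rfl fun k hk => ?_
  have hkn : k ≤ n := Nat.lt_succ_iff.mp (Finset.mem_range.mp hk)
  have ha := one_add_ne x
  rw [kerI_eq hα (k + 1) (a := 1 + Complex.I * (x : ℂ)) (by simp)]
  have hG : Real.Gamma (1 + α) = α * (cFrac α / α * (Real.Gamma (1 - α / 2) * Real.Gamma (α / 2))) := by
    rw [cFrac_eq hα, add_comm, Real.Gamma_add_one hα.1.ne']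
  have hris : risR α (k + 1) = risR (1 + α) k * α := by
    rw [risR, Finset.prod_range_succ', risR]
    simp only [Nat.cast_zero, add_zero]
    congr 1
    refine Finset.prod_congr rfl fun i _ => ?_
    push_cast; ring
  have hch : ((n : ℂ) + 1) * (n.choose k : ℂ) = ((n + 1).choose (k + 1) : ℂ) * ((k : ℂ) + 1) := by
    exact_mod_cast Nat.add_one_mul_choose_eq n k
  have hpow : (1 + Complex.I * (x : ℂ)) ^ (-(α : ℂ) - ((k + 1 : ℕ) : ℂ)) =
      (1 + Complex.I * (x : ℂ)) ^ (-(α : ℂ) - ((n : ℂ) + 1)) * (1 + Complex.I * (x : ℂ)) ^ (n - k) := by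
    rw [← Complex.cpow_natCast, ← Complex.cpow_add _ _ ha, Nat.cast_sub hkn]
    congr 1
    push_cast; ring
  rw [hG, hris, hpow, hcoef]
  generalize cFrac α / α = c
  generalize Real.Gamma (1 - α / 2) = g1
  generalize Real.Gamma (α / 2) = g2
  generalize (1 + Complex.I * (x : ℂ)) ^ (-(α : ℂ) - ((n : ℂ) + 1)) = P
  generalize (1 + Complex.I * (x : ℂ)) ^ (n - k) = Q
  push_cast
  linear_combination (2 * c * g1 * g2 * risR (1 + α) k * α * P * Q * (-2) ^ k / ((k + 1).factorial : ℂ)) * hch +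
    (2 * c * g1 * g2 * risR (1 + α) k * α * P * Q * (-2) ^ k / ((k + 1).factorial : ℂ) * ((n + 1).choose (k + 1) : ℂ) * ((k : ℂ) + 1)) * Complex.I_sq

lemma gbinomR_nat (n k : ℕ) : gbinomR (n : ℝ) k = (n.choose k : ℝ) := by
  have h : ∏ i ∈ Finset.range k, ((n : ℝ) - (i : ℝ)) = (n.descFactorial k : ℝ) := by
    induction k with
    | zero => simp
    | succ k ih =>
      rw [Finset.prod_range_succ, ih, Nat.descFactorial_succ]
      rcases le_or_gt k n with hk | hk
      · push_cast [Nat.cast_sub hk]; ring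
      · rw [Nat.descFactorial_of_lt hk]; simp
  have hf : (k.factorial : ℝ) ≠ 0 := by positivity
  rw [gbinomR, h, Nat.descFactorial_eq_factorial_mul_choose]
  push_cast
  field_simp

lemma gbinomR_neg (α : ℝ) (k : ℕ) : gbinomR (-1 - α) k = (-1) ^ k * risR (1 + α) k / k.factorial := by
  rw [gbinomR, risR]
  congr 1
  rw [← Finset.card_range k, ← Finset.prod_const, Finset.card_range, ← Finset.prod_mul_distrib]
  refine Finset.prod_congr rfl fun i _ => ?_
  ring

lemma GR_eq (α : ℝ) (j : ℕ) : GR α j =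
    ∑ k ∈ Finset.range (j + 1), (j.choose k : ℝ) * ((-2) ^ k * (risR (1 + α) k / (k + 1).factorial)) := by
  rw [GR, Finset.mul_sum]
  refine Finset.sum_congr rfl fun k _ => ?_
  have h := gbinomR_nat (j + 1) (k + 1)
  push_cast at h
  rw [h, gbinomR_neg]
  have hch : ((j : ℝ) + 1) * (j.choose k : ℝ) = ((j + 1).choose (k + 1) : ℝ) * ((k : ℝ) + 1) := by
    exact_mod_cast Nat.add_one_mul_choose_eq j k
  have h1 : (j : ℝ) + 1 ≠ 0 := by positivity
  have h2 : (k : ℝ) + 1 ≠ 0 := by positivity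
  have h3 : (k.factorial : ℝ) ≠ 0 := by positivity
  have h4 : (-2 : ℝ) ^ k = (-1) ^ k * 2 ^ k := by rw [← mul_pow]; norm_num
  rw [h4, Nat.factorial_succ]
  push_cast
  field_simp
  linear_combination -(risR (1 + α) k) * hch

lemma sum_choose_choose (n k : ℕ) (hk : k ≤ n) (z : ℂ) :
    ∑ j ∈ Finset.range (n + 1), (n.choose j : ℂ) * (j.choose k : ℂ) * z ^ (n - j) =
      (n.choose k : ℂ) * (1 + z) ^ (n - k) := by
  obtain ⟨d, rfl⟩ := Nat.exists_eq_add_of_le hk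
  rw [add_assoc, Finset.sum_range_add, Finset.sum_eq_zero, zero_add, add_pow, Finset.mul_sum]
  · rw [Nat.add_sub_cancel_left]
    refine Finset.sum_congr rfl fun i hi => ?_
    have hi' : i ≤ d := Nat.lt_succ_iff.mp (Finset.mem_range.mp hi)
    have h := Nat.choose_mul (n := k + d) (k := k + i) (s := k) (by omega)
    rw [Nat.add_sub_cancel_left, Nat.add_sub_cancel_left] at h
    have h' : ((k + d).choose (k + i) : ℂ) * ((k + i).choose k : ℂ) =
      ((k + d).choose k : ℂ) * (d.choose i : ℂ) := by exact_mod_cast h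
    rw [h', one_pow, Nat.add_sub_add_left]
    ring
  · intro j hj
    rw [Nat.choose_eq_zero_of_lt (Finset.mem_range.mp hj)]
    simp

lemma lemA (α : ℝ) (n : ℕ) (z : ℂ) :
    ∑ k ∈ Finset.range (n + 1), (n.choose k : ℂ) * (-2) ^ k *
          ((risR (1 + α) k / (k + 1).factorial : ℝ) : ℂ) * (1 + z) ^ (n - k) =
    ∑ j ∈ Finset.range (n + 1), (n.choose j : ℂ) * z ^ (n - j) * ((GR α j : ℝ) : ℂ) := by
  have h : ∀ j ∈ Finset.range (n + 1), ((GR α j : ℝ) : ℂ) = ∑ k ∈ Finset.range (n + 1),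
      (j.choose k : ℂ) * ((-2) ^ k * ((risR (1 + α) k / (k + 1).factorial : ℝ) : ℂ)) := by
    intro j hj
    rw [GR_eq]
    push_cast
    refine Finset.sum_subset (fun i hi => ?_) (fun i _ hi => ?_)
    · simp only [Finset.mem_range] at *; omega
    · rw [Nat.choose_eq_zero_of_lt (by simp only [Finset.mem_range] at *; omega)]
      simp
  have h' : ∑ j ∈ Finset.range (n + 1), (n.choose j : ℂ) * z ^ (n - j) * ((GR α j : ℝ) : ℂ) =
      ∑ j ∈ Finset.range (n + 1), ∑ k ∈ Finset.range (n + 1), (n.choose j : ℂ) * z ^ (n - j) *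
      ((j.choose k : ℂ) * ((-2) ^ k * ((risR (1 + α) k / (k + 1).factorial : ℝ) : ℂ))) :=
    Finset.sum_congr rfl fun j hj => by rw [h j hj, Finset.mul_sum]
  rw [h', Finset.sum_comm]
  refine Finset.sum_congr rfl fun k hk => ?_
  have hkn : k ≤ n := Nat.lt_succ_iff.mp (Finset.mem_range.mp hk)
  have e := sum_choose_choose n k hkn z
  calc _ = ((-2) ^ k * ((risR (1 + α) k / (k + 1).factorial : ℝ) : ℂ)) * ((n.choose k : ℂ) * (1 + z) ^ (n - k)) := by ring
    _ = _ := by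
      rw [← e, Finset.mul_sum]
      refine Finset.sum_congr rfl fun j _ => ?_
      ring

lemma sum_even_odd (n : ℕ) (h : ℕ → ℂ) : ∑ j ∈ Finset.range (n + 1), h j =
    ∑ l ∈ (Finset.range (n + 1)).filter (fun l => 2 * l ≤ n), h (2 * l) +
    ∑ l ∈ (Finset.range (n + 1)).filter (fun l => 2 * l + 1 ≤ n), h (2 * l + 1) := by
  rw [← Finset.sum_filter_add_sum_filter_not (Finset.range (n + 1)) (fun j => j % 2 = 0)]
  congr 1
  · refine Finset.sum_nbij' (fun j => j / 2) (fun l => 2 * l) ?_ ?_ ?_ ?_ ?_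
    all_goals intro j hj; simp only [Finset.mem_filter, Finset.mem_range] at *
    · omega
    · omega
    · omega
    · omega
    · congr 1; omega
  · refine Finset.sum_nbij' (fun j => j / 2) (fun l => 2 * l + 1) ?_ ?_ ?_ ?_ ?_
    all_goals intro j hj; simp only [Finset.mem_filter, Finset.mem_range] at *
    · omega
    · omega
    · omega
    · omega
    · congr 1; omega

lemma lemB (α : ℝ) (n : ℕ) (x : ℝ) :
    Complex.I * ∑ j ∈ Finset.range (n + 1), (n.choose j : ℂ) * (Complex.I * (x : ℂ)) ^ (n - j) * ((GR α j : ℝ) : ℂ) =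
    Complex.I ^ (n + 1) *
      (((∑ l ∈ (Finset.range (n + 1)).filter (fun l => 2 * l ≤ n),
            (-1 : ℝ) ^ l * gbinomR (n : ℝ) (2 * l) * x ^ (n - 2 * l) * GR α (2 * l) : ℝ) : ℂ) -
        Complex.I * ((∑ l ∈ (Finset.range (n + 1)).filter (fun l => 2 * l + 1 ≤ n),
            (-1 : ℝ) ^ l * gbinomR (n : ℝ) (2 * l + 1) * x ^ (n - 1 - 2 * l) *
              GR α (2 * l + 1) : ℝ) : ℂ)) := by
  rw [sum_even_odd, mul_add, mul_sub, sub_eq_add_neg]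
  have hI : ∀ l : ℕ, ((-1 : ℂ)) ^ l * Complex.I ^ (2 * l) = 1 := by
    intro l; rw [pow_mul, Complex.I_sq, ← mul_pow]; simp
  congr 1
  · push_cast
    rw [Finset.mul_sum, Finset.mul_sum]
    refine Finset.sum_congr rfl fun l hl => ?_
    have hl' : 2 * l ≤ n := (Finset.mem_filter.mp hl).2
    rw [gbinomR_nat, mul_pow]
    push_cast
    have : Complex.I ^ (n + 1) = Complex.I ^ (n - 2 * l) * Complex.I ^ (2 * l) * Complex.I := by
      rw [← pow_add, ← pow_succ]; congr 1; omega
    rw [this]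
    linear_combination (-Complex.I * (n.choose (2 * l) : ℂ) * Complex.I ^ (n - 2 * l) * (x : ℂ) ^ (n - 2 * l) * (GR α (2 * l) : ℂ)) * hI l
  · push_cast
    rw [Finset.mul_sum, Finset.mul_sum, Finset.mul_sum, ← Finset.sum_neg_distrib]
    refine Finset.sum_congr rfl fun l hl => ?_
    have hl' : 2 * l + 1 ≤ n := (Finset.mem_filter.mp hl).2
    have e : n - 1 - 2 * l = n - (2 * l + 1) := by omega
    rw [gbinomR_nat, mul_pow, e]
    push_cast
    have : Complex.I ^ (n + 1) = Complex.I ^ (n - (2 * l + 1)) * Complex.I ^ (2 * l) * (Complex.I * Complex.I) := by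
      rw [← pow_two, ← pow_add, ← pow_add]; congr 1; omega
    rw [this, Complex.I_mul_I]
    linear_combination (-Complex.I * (n.choose (2 * l + 1) : ℂ) * Complex.I ^ (n - (2 * l + 1)) * (x : ℂ) ^ (n - (2 * l + 1)) * (GR α (2 * l + 1) : ℂ)) * hI l

lemma log_one_add (x : ℝ) : Complex.log (1 + Complex.I * (x : ℂ)) =
    ((1 / 2 * Real.log (1 + x ^ 2) : ℝ) : ℂ) + ((Real.arctan x : ℝ) : ℂ) * Complex.I := by
  have hp : 0 < 1 + x ^ 2 := by positivity
  have h : 1 + Complex.I * (x : ℂ) = Complex.exp (((1 / 2 * Real.log (1 + x ^ 2) : ℝ) : ℂ) +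
      ((Real.arctan x : ℝ) : ℂ) * Complex.I) := by
    have hs : Real.exp (1 / 2 * Real.log (1 + x ^ 2)) = Real.sqrt (1 + x ^ 2) := by
      rw [Real.sqrt_eq_rpow, Real.rpow_def_of_pos hp, mul_comm]
    have hs0 : Real.sqrt (1 + x ^ 2) ≠ 0 := (Real.sqrt_pos.mpr hp).ne'
    have hs1 : ((Real.sqrt (1 + x ^ 2) : ℝ) : ℂ) ≠ 0 := by exact_mod_cast hs0
    rw [Complex.exp_add, ← Complex.ofReal_exp, hs, Complex.exp_mul_I, ← Complex.ofReal_cos,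
      ← Complex.ofReal_sin, Real.cos_arctan, Real.sin_arctan]
    rw [Complex.ofReal_div, Complex.ofReal_div, Complex.ofReal_one]
    field_simp
  have h1 := Real.arctan_lt_pi_div_two x
  have h2 := Real.neg_pi_div_two_lt_arctan x
  have := Real.pi_pos
  rw [h, Complex.log_exp]
  · simp [-Complex.ofReal_arctan]; linarith
  · simp [-Complex.ofReal_arctan]; linarith

lemma pow_eq (α : ℝ) (n : ℕ) (x : ℝ) :
    Complex.I ^ (n + 1) * (1 + Complex.I * (x : ℂ)) ^ (-(α : ℂ) - ((n : ℂ) + 1)) =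
    ((((1 + x ^ 2) ^ (((n : ℝ) + 1 + α) / 2))⁻¹ : ℝ) : ℂ) *
     (((Real.cos (((n : ℝ) + 1 + α) * arccot x - Real.pi * α / 2) : ℝ) : ℂ) +
       ((Real.sin (((n : ℝ) + 1 + α) * arccot x - Real.pi * α / 2) : ℝ) : ℂ) * Complex.I) := by
  have hp : 0 < 1 + x ^ 2 := by positivity
  have hI : Complex.I ^ (n + 1) = Complex.exp (((n + 1 : ℕ) : ℂ) * (Real.pi / 2 * Complex.I)) := by
    rw [Complex.exp_nat_mul, Complex.exp_pi_div_two_mul_I]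
  rw [Complex.ofReal_cos, Complex.ofReal_sin, ← Complex.exp_mul_I, ← Real.rpow_neg hp.le,
    Real.rpow_def_of_pos hp, Complex.ofReal_exp, Complex.cpow_def_of_ne_zero (one_add_ne x), log_one_add,
    hI, ← Complex.exp_add, ← Complex.exp_add, arccot]
  congr 1
  push_cast
  ring

theorem fracLap_SH (α : ℝ) (hα : α ∈ Set.Ioo (0 : ℝ) 2) (n : ℕ) (x : ℝ) :
    IntegrableOn (fun y : ℝ => (SH' n (x - y) - SH' n (x + y)) * y ^ (-α)) (Set.Ioi 0) ∧
    (cFrac α / α) * ∫ y in Set.Ioi (0 : ℝ), (SH' n (x - y) - SH' n (x + y)) * y ^ (-α) =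
      (2 * ((n : ℝ) + 1) * Real.Gamma (1 + α) / (1 + x ^ 2) ^ (((n : ℝ) + 1 + α) / 2)) *
          Real.cos (((n : ℝ) + 1 + α) * arccot x - Real.pi * α / 2) *
          ∑ l ∈ (Finset.range (n + 1)).filter (fun l => 2 * l ≤ n),
            (-1 : ℝ) ^ l * gbinomR (n : ℝ) (2 * l) * x ^ (n - 2 * l) * GR α (2 * l)
        + (2 * ((n : ℝ) + 1) * Real.Gamma (1 + α) / (1 + x ^ 2) ^ (((n : ℝ) + 1 + α) / 2)) *
          Real.sin (((n : ℝ) + 1 + α) * arccot x - Real.pi * α / 2) *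
          ∑ l ∈ (Finset.range (n + 1)).filter (fun l => 2 * l + 1 ≤ n),
            (-1 : ℝ) ^ l * gbinomR (n : ℝ) (2 * l + 1) * x ^ (n - 1 - 2 * l) *
              GR α (2 * l + 1) := by
  refine ⟨?_, ?_⟩
  · have := (integrand_integrable hα n x).im
    refine this.congr (.of_forall fun y => ?_)
    exact (integrand_eq n x y α).symm
  · rw [lhs_eq hα, lemA]
    have hB := lemB α n x
    have hP := pow_eq α n x
    set Se := ∑ l ∈ (Finset.range (n + 1)).filter (fun l => 2 * l ≤ n),
            (-1 : ℝ) ^ l * gbinomR (n : ℝ) (2 * l) * x ^ (n - 2 * l) * GR α (2 * l)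
    set So := ∑ l ∈ (Finset.range (n + 1)).filter (fun l => 2 * l + 1 ≤ n),
            (-1 : ℝ) ^ l * gbinomR (n : ℝ) (2 * l + 1) * x ^ (n - 1 - 2 * l) *
              GR α (2 * l + 1)
    set W := (1 + Complex.I * (x : ℂ)) ^ (-(α : ℂ) - ((n : ℂ) + 1))
    set S := ∑ j ∈ Finset.range (n + 1), (n.choose j : ℂ) * (Complex.I * (x : ℂ)) ^ (n - j) * ((GR α j : ℝ) : ℂ)
    set co := Real.cos (((n : ℝ) + 1 + α) * arccot x - Real.pi * α / 2)
    set si := Real.sin (((n : ℝ) + 1 + α) * arccot x - Real.pi * α / 2)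
    set r := (1 + x ^ 2) ^ (((n : ℝ) + 1 + α) / 2)
    have key : Complex.I * (W * S) = ((r⁻¹ : ℝ) : ℂ) * ((co : ℂ) + (si : ℂ) * Complex.I) *
        ((Se : ℂ) - Complex.I * (So : ℂ)) := by
      rw [← hP]
      linear_combination W * hB
    have him : (W * S).im = -(r⁻¹ * (co * Se + si * So)) := by
      have h := congrArg Complex.re key
      rw [mul_assoc ((r⁻¹ : ℝ) : ℂ), Complex.re_ofReal_mul] at h
      simp only [Complex.I_mul_re] at h
      simp at h
      simp
      linarith
    rw [him, div_eq_mul_inv]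
    ring
end

section
/- Let α ∈ (0,2), n ∈ ℕ (n ≥ 0), and x ∈ ℝ. Then the following two finite-sum expressions are equal: (Γ(1+α)/(ix+1)^(1+α)) · ∑_{k=0}^{n} C(n,k)·C(−1−α,k)·(2/(ix+1))^k = (Γ(1+α)/(ix+1)^(n+1+α)) · ∑_{l=0}^{n} C(n,l)·(ix)^(n−l)·H_α(l). (That is, the closed-form fractional Laplacian of μ_n can be expanded as a polynomial in ix times (ix+1)^(−n−1−α).) -/
open MeasureTheory Finset

theorem gbinom_natCast (n k : ℕ) : gbinom (n : ℂ) k = (n.choose k : ℂ) := by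
  unfold gbinom
  rw [div_eq_iff (by exact_mod_cast k.factorial_ne_zero)]
  have h := Nat.descFactorial_eq_factorial_mul_choose n k
  have h2 : ((n.descFactorial k : ℕ) : ℂ) = ∏ i ∈ Finset.range k, ((n : ℂ) - (i : ℂ)) := by
    clear h
    induction k with
    | zero => simp
    | succ k ih =>
      rw [Nat.descFactorial_succ, Finset.prod_range_succ, ← ih]
      rcases le_or_gt k n with h | h
      · push_cast [Nat.cast_sub h]; ring
      · rw [Nat.descFactorial_of_lt h]; simp
  rw [← h2, h]
  push_cast
  ring

/-- The polynomial identity behind the expansion. -/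
theorem expansion_aux (n : ℕ) (y : ℂ) (b : ℕ → ℂ) :
    ∑ l ∈ Finset.range (n + 1), (n.choose l : ℂ) * y ^ (n - l) *
        (∑ k ∈ Finset.range (l + 1), (l.choose k : ℂ) * b k) =
      ∑ k ∈ Finset.range (n + 1), (n.choose k : ℂ) * b k * (y + 1) ^ (n - k) := by
  have h1 : ∀ l ∈ Finset.range (n + 1),
      (n.choose l : ℂ) * y ^ (n - l) * (∑ k ∈ Finset.range (l + 1), (l.choose k : ℂ) * b k) =
      ∑ k ∈ Finset.range (n + 1), (n.choose l : ℂ) * y ^ (n - l) * ((l.choose k : ℂ) * b k) := by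
    intro l hl
    rw [← Finset.mul_sum]
    congr 1
    apply Finset.sum_subset
    · intro k hk
      simp only [Finset.mem_range] at *
      omega
    · intro k _ hk
      simp only [Finset.mem_range] at hk
      rw [Nat.choose_eq_zero_of_lt (by omega)]
      simp
  rw [Finset.sum_congr rfl h1, Finset.sum_comm]
  apply Finset.sum_congr rfl
  intro k hk
  simp only [Finset.mem_range] at hk
  obtain ⟨m, rfl⟩ : ∃ m, n = k + m := ⟨n - k, by omega⟩
  rw [add_assoc, Finset.sum_range_add, Finset.sum_eq_zero, zero_add, Nat.add_sub_cancel_left,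
    add_comm y 1, add_pow, Finset.mul_sum]
  · apply Finset.sum_congr rfl
    intro j hj
    simp only [Finset.mem_range] at hj
    have h3 := Nat.choose_mul (n := k + m) (k := k + j) (s := k) (by omega) 
    rw [Nat.add_sub_cancel_left, Nat.add_sub_cancel_left] at h3
    have h4 : ((k + m).choose (k + j) : ℂ) * ((k + j).choose k : ℂ) =
        ((k + m).choose k : ℂ) * (m.choose j : ℂ) := by exact_mod_cast h3
    rw [show k + m - (k + j) = m - j by omega, one_pow]
    linear_combination (y ^ (m - j) * b k) * h4
  · intro l hl
    simp only [Finset.mem_range] at hl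
    rw [Nat.choose_eq_zero_of_lt hl]
    simp

theorem fracLap_christov_expansion (α : ℝ) (hα : α ∈ Set.Ioo (0 : ℝ) 2) (n : ℕ) (x : ℝ) :
    ((Real.Gamma (1 + α) : ℂ) / (Complex.I * (x : ℂ) + 1) ^ ((1 : ℂ) + (α : ℂ))) *
        ∑ k ∈ Finset.range (n + 1),
          gbinom (n : ℂ) k * gbinom (-1 - (α : ℂ)) k * (2 / (Complex.I * (x : ℂ) + 1)) ^ k =
      ((Real.Gamma (1 + α) : ℂ) /
            (Complex.I * (x : ℂ) + 1) ^ ((n : ℂ) + 1 + (α : ℂ))) *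
        ∑ l ∈ Finset.range (n + 1),
          gbinom (n : ℂ) l * (Complex.I * (x : ℂ)) ^ (n - l) * Hc α l := by
  set w : ℂ := Complex.I * (x : ℂ) + 1 with hw
  have hw0 : w ≠ 0 := by
    intro h
    have := congrArg Complex.re h
    simp [hw] at this
  have hpow : w ^ ((n : ℂ) + 1 + (α : ℂ)) = w ^ n * w ^ ((1 : ℂ) + (α : ℂ)) := by
    rw [add_assoc, Complex.cpow_add _ _ hw0, Complex.cpow_natCast]
  have key := expansion_aux n (Complex.I * (x : ℂ)) (fun k => gbinom (-1 - (α : ℂ)) k * 2 ^ k)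
  have hR : ∑ l ∈ Finset.range (n + 1),
      gbinom (n : ℂ) l * (Complex.I * (x : ℂ)) ^ (n - l) * Hc α l =
      w ^ n * ∑ k ∈ Finset.range (n + 1),
          gbinom (n : ℂ) k * gbinom (-1 - (α : ℂ)) k * (2 / w) ^ k := by
    unfold Hc
    simp only [gbinom_natCast, mul_assoc] at key ⊢
    rw [key, Finset.mul_sum]
    apply Finset.sum_congr rfl
    intro k hk
    simp only [Finset.mem_range] at hk
    rw [← hw, div_pow, ← Nat.sub_add_cancel (show k ≤ n by omega), pow_add]
    simp only [Nat.add_sub_cancel]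
    field_simp
  have hwa : w ^ ((1 : ℂ) + (α : ℂ)) ≠ 0 := by
    rw [Complex.cpow_ne_zero_iff]
    exact Or.inl hw0
  rw [hR, hpow]
  field_simp
end

section
/- Let α ∈ (0,2), n ∈ ℕ with n ≥ 1, and x ∈ ℝ. Define h : ℂ → ℂ by h(z) = z^(−α)·(z + x + i)^(n−1), using the principal branch for z^(−α). Then the n-th complex derivative of h at the point z = i − x satisfies (1/n!)·h^(n)(i−x) = ∑_{k=1}^{n} C(n−1,k−1)·C(−α,k)·(i−x)^(−α−k)·(2i)^(k−1). (This is the residue of the integrand g_n at its pole z = i−x in the contour-integral computation of the fractional Laplacian of λ_n.) -/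
open MeasureTheory Finset

lemma iter_cpow (c : ℂ) (k : ℕ) : ∀ z ∈ Complex.slitPlane,
    iteratedDeriv k (fun z : ℂ => z ^ c) z
      = (∏ i ∈ Finset.range k, (c - (i : ℂ))) * z ^ (c - (k : ℂ)) := by
  induction k with
  | zero => intro z hz; simp
  | succ k ih =>
    intro z hz
    rw [iteratedDeriv_succ]
    have : iteratedDeriv k (fun z : ℂ => z ^ c) =ᶠ[nhds z]
        fun z => (∏ i ∈ Finset.range k, (c - (i : ℂ))) * z ^ (c - (k : ℂ)) := by
      filter_upwards [Complex.isOpen_slitPlane.mem_nhds hz] with w hw using ih w hw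
    rw [this.deriv_eq]
    have h := ((hasDerivAt_id z).cpow_const (c := c - (k : ℂ)) hz).const_mul
      (∏ i ∈ Finset.range k, (c - (i : ℂ)))
    refine h.deriv.trans ?_
    rw [Finset.prod_range_succ]
    push_cast
    simp only [id, mul_one, sub_sub]
    ring

lemma gbinom_nat (m k : ℕ) : gbinom (m : ℂ) k = (m.choose k : ℂ) := by
  unfold gbinom
  rw [← descPochhammer_eval_eq_prod_range, descPochhammer_eval_eq_descFactorial,
    Nat.descFactorial_eq_factorial_mul_choose]
  have : (k.factorial : ℂ) ≠ 0 := by exact_mod_cast k.factorial_ne_zero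
  push_cast
  field_simp

theorem residue_at_i_sub_x (α : ℝ) (hα : α ∈ Set.Ioo (0 : ℝ) 2) (n : ℕ) (hn : 1 ≤ n) (x : ℝ) :
    (1 / (n.factorial : ℂ)) *
        iteratedDeriv n
          (fun z : ℂ => z ^ (-(α : ℂ)) * (z + (x : ℂ) + Complex.I) ^ (n - 1))
          (Complex.I - (x : ℂ)) =
      ∑ k ∈ Finset.Icc 1 n,
        gbinom ((n : ℂ) - 1) (k - 1) * gbinom (-(α : ℂ)) k *
          (Complex.I - (x : ℂ)) ^ (-(α : ℂ) - (k : ℂ)) * (2 * Complex.I) ^ (k - 1) := by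
  obtain ⟨m, rfl⟩ : ∃ m, n = m + 1 := ⟨n - 1, by omega⟩
  have hz : Complex.I - (x : ℂ) ∈ Complex.slitPlane := by
    right; simp
  have hg (j : ℕ) : iteratedDeriv j (fun z : ℂ => (z + (x : ℂ) + Complex.I) ^ m)
      (Complex.I - (x : ℂ)) = (m.descFactorial j : ℂ) * (2 * Complex.I) ^ (m - j) := by
    have := congrFun (iteratedDeriv_comp_add_const j (fun z : ℂ => z ^ m) ((x : ℂ) + Complex.I))
      (Complex.I - (x : ℂ))
    simp only [← add_assoc] at this
    rw [this, iteratedDeriv_pow]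
    congr 2
    ring
  have hf : ContDiffAt ℂ ((m + 1 : ℕ) : WithTop ℕ∞) (fun z : ℂ => z ^ (-(α : ℂ)))
      (Complex.I - (x : ℂ)) := (analyticAt_id.cpow analyticAt_const hz).contDiffAt
  simp only [Nat.add_sub_cancel]
  rw [iteratedDeriv_fun_mul hf (by fun_prop)]
  rw [Finset.sum_range_succ', ← Finset.Ico_add_one_right_eq_Icc, Finset.sum_Ico_eq_sum_range]
  have h0 : m.descFactorial (m + 1 - 0) = 0 := by
    rw [Nat.descFactorial_eq_zero_iff_lt]; omega
  rw [hg (m + 1 - 0), h0]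
  simp only [Nat.cast_zero, zero_mul, mul_zero, add_zero, Finset.mul_sum]
  refine Finset.sum_congr (by simp) ?_
  intro j hj
  have hj : j ≤ m := by simp at hj; omega
  have e1 : m + 1 - (j + 1) = m - j := by omega
  have e2 : m - (m - j) = j := by omega
  have e3 : 1 + j - 1 = j := by omega
  rw [hg, iter_cpow _ _ _ hz, e1, e2, e3, add_comm 1 j]
  have e4 : ((m + 1 : ℕ) : ℂ) - 1 = (m : ℂ) := by push_cast; ring
  rw [e4, gbinom_nat]
  unfold gbinom
  have k1 := Nat.factorial_mul_descFactorial (Nat.sub_le m j)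
  rw [e2] at k1
  have k2 := Nat.add_one_mul_choose_eq m j
  have k3 : (m + 1).choose (j + 1) * m.descFactorial (m - j) * (j + 1).factorial
      = (m + 1).factorial * m.choose j := by
    rw [Nat.factorial_succ, Nat.factorial_succ, ← k1]
    calc _ = ((m + 1).choose (j + 1) * (j + 1)) * (j.factorial * m.descFactorial (m - j)) := by ring
      _ = _ := by rw [← k2]; ring
  have k4 : ((m + 1).choose (j + 1) : ℂ) * m.descFactorial (m - j) * (j + 1).factorial
      = (m + 1).factorial * m.choose j := by exact_mod_cast k3
  have n1 : ((j + 1).factorial : ℂ) ≠ 0 := by exact_mod_cast (j + 1).factorial_ne_zero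
  have n2 : ((m + 1).factorial : ℂ) ≠ 0 := by exact_mod_cast (m + 1).factorial_ne_zero
  generalize (Complex.I - (x : ℂ)) ^ (-(α : ℂ) - ((j + 1 : ℕ) : ℂ)) = A
  generalize (∏ i ∈ Finset.range (j + 1), (-(α : ℂ) - (i : ℂ))) = B
  generalize (2 * Complex.I) ^ j = D
  field_simp
  linear_combination (A * B * D) * k4
end
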